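/- Let (A¹, B¹) be an n₁×m₁ bimatrix game, (A², B²) an n₂×m₂ bimatrix game, and let (A, B) be their product game. If (x, y) is a Nash equilibrium of (A, B), then (x², y²) given by the marginals x² i = ∑ l : Fin n₁, x (l, i) and y² j = ∑ l : Fin m₁, y (l, j) is a Nash equilibrium of (A², B²). -/

import Mathlib

open Finset

/-- A mixed strategy: nonnegative and sums to 1. -/
def IsMixed {n : Type*} [Fintype n] (x : n → ℝ) : Prop :=
  (∀ i, 0 ≤ x i) ∧ ∑ i, x i = 1

/-- Expected payoff for the matrix `M` under strategies `x`, `y`. -/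
def payoff {n m : Type*} [Fintype n] [Fintype m] (M : Matrix n m ℝ)
    (x : n → ℝ) (y : m → ℝ) : ℝ :=
  ∑ i, ∑ j, x i * M i j * y j

/-- Nash equilibrium of the bimatrix game `(A, B)`. -/
def IsNash {n m : Type*} [Fintype n] [Fintype m] (A B : Matrix n m ℝ)
    (x : n → ℝ) (y : m → ℝ) : Prop :=
  IsMixed x ∧ IsMixed y ∧
  (∀ x', IsMixed x' → payoff A x' y ≤ payoff A x y) ∧
  (∀ y', IsMixed y' → payoff B x y' ≤ payoff B x y)

/-- The product game of two bimatrix games (one payoff matrix). -/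
def prodGame {n₁ m₁ n₂ m₂ : Type*} (M₁ : Matrix n₁ m₁ ℝ) (M₂ : Matrix n₂ m₂ ℝ) :
    Matrix (n₁ × n₂) (m₁ × m₂) ℝ :=
  fun p q => M₁ p.1 q.1 + M₂ p.2 q.2

/-- One payoff matrix of the sum game via constant `c` on the off-diagonal blocks. -/
def sumGame {n₁ m₁ n₂ m₂ : Type*} (M₁ : Matrix n₁ m₁ ℝ) (M₂ : Matrix n₂ m₂ ℝ)
    (c : ℝ) : Matrix (n₁ ⊕ n₂) (m₁ ⊕ m₂) ℝ :=
  fun i j => match i, j with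
    | Sum.inl i, Sum.inl j => M₁ i j
    | Sum.inr i, Sum.inr j => M₂ i j
    | _, _ => c

theorem payoff_prodGame_aux {n₁ m₁ n₂ m₂ : ℕ}
    (M₁ : Matrix (Fin n₁) (Fin m₁) ℝ) (M₂ : Matrix (Fin n₂) (Fin m₂) ℝ)
    (x : Fin n₁ × Fin n₂ → ℝ) (y : Fin m₁ × Fin m₂ → ℝ) :
    payoff (prodGame M₁ M₂) x y =
      payoff M₁ (fun i => ∑ l, x (i, l)) (fun j => ∑ l, y (j, l)) +
      payoff M₂ (fun i => ∑ l, x (l, i)) (fun j => ∑ l, y (l, j)) := by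
  unfold payoff prodGame
  simp only [mul_add, add_mul, Finset.sum_add_distrib, Fintype.sum_prod_type]
  congr 1
  · refine Finset.sum_congr rfl fun i _ => ?_
    rw [Finset.sum_comm]
    refine Finset.sum_congr rfl fun j _ => ?_
    simp only [Finset.sum_mul, Finset.mul_sum]
    rw [Finset.sum_comm]
  · rw [Finset.sum_comm]
    refine Finset.sum_congr rfl fun i _ => ?_
    calc _ = ∑ a, ∑ j, ∑ b, x (a, i) * M₂ i j * y (b, j) :=
          Finset.sum_congr rfl fun a _ => Finset.sum_comm
      _ = _ := by
          rw [Finset.sum_comm]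
          refine Finset.sum_congr rfl fun j _ => ?_
          simp only [Finset.sum_mul, Finset.mul_sum]
          rw [Finset.sum_comm]

theorem isMixed_snd_aux {n m : ℕ} {x : Fin n × Fin m → ℝ} (h : IsMixed x) :
    IsMixed (fun i => ∑ l, x (l, i)) := by
  refine ⟨fun i => Finset.sum_nonneg fun l _ => h.1 _, ?_⟩
  rw [← h.2, Fintype.sum_prod_type, Finset.sum_comm]

theorem isMixed_fst_aux {n m : ℕ} {x : Fin n × Fin m → ℝ} (h : IsMixed x) :
    IsMixed (fun i => ∑ l, x (i, l)) := by
  refine ⟨fun i => Finset.sum_nonneg fun l _ => h.1 _, ?_⟩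
  rw [← h.2, Fintype.sum_prod_type]

theorem exists_mixed_aux {n m : ℕ} {x : Fin n × Fin m → ℝ} (h : IsMixed x)
    {x' : Fin m → ℝ} (h' : IsMixed x') :
    ∃ z : Fin n × Fin m → ℝ, IsMixed z ∧ (fun i => ∑ l, z (i, l)) = (fun i => ∑ l, x (i, l)) ∧
      (fun i => ∑ l, z (l, i)) = x' := by
  have h1 := isMixed_fst_aux h
  have h1s : ∑ i, ∑ l, x (i, l) = 1 := h1.2
  refine ⟨fun p => (∑ l, x (p.1, l)) * x' p.2,
    ⟨fun p => mul_nonneg (h1.1 _) (h'.1 _), ?_⟩, ?_, ?_⟩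
  · simp only [Fintype.sum_prod_type, ← Finset.mul_sum, h'.2, mul_one, h1s]
  · funext i
    simp only [← Finset.mul_sum, h'.2, mul_one]
  · funext i
    simp only [← Finset.sum_mul, h1s, one_mul]

theorem nash_of_product_marginal_snd {n₁ m₁ n₂ m₂ : ℕ}
    (A₁ B₁ : Matrix (Fin n₁) (Fin m₁) ℝ) (A₂ B₂ : Matrix (Fin n₂) (Fin m₂) ℝ)
    (x : Fin n₁ × Fin n₂ → ℝ) (y : Fin m₁ × Fin m₂ → ℝ)
    (h : IsNash (prodGame A₁ A₂) (prodGame B₁ B₂) x y) :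
    IsNash A₂ B₂ (fun i => ∑ l : Fin n₁, x (l, i)) (fun j => ∑ l : Fin m₁, y (l, j)) := by
  obtain ⟨hx, hy, hA, hB⟩ := h
  refine ⟨isMixed_snd_aux hx, isMixed_snd_aux hy, fun x' h' => ?_, fun y' h' => ?_⟩
  · obtain ⟨z, hz, e1, e2⟩ := exists_mixed_aux hx h'
    have := hA z hz
    rw [payoff_prodGame_aux, payoff_prodGame_aux, e1, e2] at this
    linarith
  · obtain ⟨z, hz, e1, e2⟩ := exists_mixed_aux hy h'
    have := hB z hz
    rw [payoff_prodGame_aux, payoff_prodGame_aux, e1, e2] at this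
    linarith
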